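/- Let d ≥ 1 and let x_1, …, x_N (N ≥ 1) be pairwise distinct points in ℝ^d. Let π_1, …, π_N be weights with π_j > 0 for all j and ∑_{j=1}^N π_j = 1. Fix an index j' and fix bandwidths σ_j > 0 for all j ≠ j'. Then the π-KDE total log-likelihood L(σ, π) = ∑_{i=1}^N log( ∑_{j=1}^N π_j · K_{σ_j}(x_i, x_j) ), viewed as a function of σ_{j'} alone, tends to +∞ as σ_{j'} → 0 from the right (within (0, ∞)). -/

import Mathlib

/-- The isotropic Gaussian kernel on `ℝ^d` with center `μ` and bandwidth `σ`:
`K_σ(x, μ) = (2πσ²)^{-d/2} · exp(−‖x − μ‖² / (2σ²))`. -/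
noncomputable def gaussKernel (d : ℕ) (σ : ℝ) (x μ : EuclideanSpace ℝ (Fin d)) : ℝ :=
  (2 * Real.pi * σ ^ 2) ^ (-(d : ℝ) / 2) * Real.exp (-‖x - μ‖ ^ 2 / (2 * σ ^ 2))

theorem gaussKernel_pos_aux (d : ℕ) (s : ℝ) (hs : 0 < s) (x μ : EuclideanSpace ℝ (Fin d)) :
    0 < gaussKernel d s x μ := by
  unfold gaussKernel
  have := Real.pi_pos
  positivity

theorem gaussKernel_self_tendsto_aux (d : ℕ) (hd : 1 ≤ d) (x : EuclideanSpace ℝ (Fin d)) :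
    Filter.Tendsto (fun s : ℝ => gaussKernel d s x x) (nhdsWithin 0 (Set.Ioi 0))
      Filter.atTop := by
  have h0 : ∀ s : ℝ, gaussKernel d s x x = (2 * Real.pi * s ^ 2) ^ (-(d : ℝ) / 2) := by
    intro s
    simp [gaussKernel]
  simp only [h0]
  have hneg : (-(d : ℝ) / 2) < 0 := by
    have : (1 : ℝ) ≤ d := by exact_mod_cast hd
    linarith
  refine (tendsto_rpow_neg_nhdsGT_zero hneg).comp ?_
  refine tendsto_nhdsWithin_iff.2 ⟨?_, ?_⟩
  · have hc : Continuous (fun s : ℝ => 2 * Real.pi * s ^ 2) := by fun_prop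
    have := hc.tendsto 0
    simp only [ne_eq, OfNat.ofNat_ne_zero, not_false_eq_true, zero_pow, mul_zero] at this
    exact this.mono_left nhdsWithin_le_nhds
  · filter_upwards [self_mem_nhdsWithin] with s hs
    have hs' : 0 < s := hs
    have := Real.pi_pos
    simp only [Set.mem_Ioi]
    positivity

/-- If the data points are pairwise distinct, the weights are positive and sum to one, and
all bandwidths except the `j'`-th one are fixed and positive, the π-KDE total
log-likelihood tends to `+∞` as `σ_{j'} → 0⁺`. -/
theorem pikde_mll_tendsto_atTop_of_bandwidth_collapse
    (d N : ℕ) (hd : 1 ≤ d) (hN : 1 ≤ N)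
    (x : Fin N → EuclideanSpace ℝ (Fin d)) (hx : Function.Injective x)
    (w : Fin N → ℝ) (hw : ∀ j, 0 < w j) (hwsum : ∑ j, w j = 1)
    (j' : Fin N) (σ : Fin N → ℝ) (hσ : ∀ j, j ≠ j' → 0 < σ j) :
    Filter.Tendsto
      (fun s : ℝ => ∑ i, Real.log
        (∑ j, w j * gaussKernel d (if j = j' then s else σ j) (x i) (x j)))
      (nhdsWithin 0 (Set.Ioi 0)) Filter.atTop := by
  classical
  have hlow : Filter.Tendsto
      (fun s : ℝ => ∑ i, Real.log
        (w i * gaussKernel d (if i = j' then s else σ i) (x i) (x i)))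
      (nhdsWithin 0 (Set.Ioi 0)) Filter.atTop := by
    have heq : ∀ s : ℝ, ∑ i, Real.log
        (w i * gaussKernel d (if i = j' then s else σ i) (x i) (x i)) =
        Real.log (w j' * gaussKernel d s (x j') (x j')) +
        ∑ i ∈ Finset.univ.erase j', Real.log (w i * gaussKernel d (σ i) (x i) (x i)) := by
      intro s
      rw [← Finset.add_sum_erase _ _ (Finset.mem_univ j')]
      congr 1
      · simp
      · refine Finset.sum_congr rfl fun i hi => ?_
        rw [if_neg (Finset.ne_of_mem_erase hi)]
    simp only [heq]
    refine Filter.tendsto_atTop_add_const_right _ _ ?_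
    exact Real.tendsto_log_atTop.comp
      ((gaussKernel_self_tendsto_aux d hd (x j')).const_mul_atTop (hw j'))
  refine Filter.tendsto_atTop_mono' _ ?_ hlow
  filter_upwards [self_mem_nhdsWithin] with s hs
  have hpos : ∀ i j, 0 < w j * gaussKernel d (if j = j' then s else σ j) (x i) (x j) := by
    intro i j
    refine mul_pos (hw j) (gaussKernel_pos_aux d _ ?_ _ _)
    split_ifs with h
    · exact hs
    · exact hσ j h
  refine Finset.sum_le_sum fun i _ => Real.log_le_log (hpos i i) ?_
  exact Finset.single_le_sum
    (f := fun j => w j * gaussKernel d (if j = j' then s else σ j) (x i) (x j))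
    (fun j _ => (hpos i j).le) (Finset.mem_univ i)
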